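/- Let (S, A, O, H, ρ0, P, Ω, r) be a finite POMDP that is L-decodable with decoder p* (L ≥ 1). Then there exist a finite set Z with |Z| ≤ |S|·(|O|·|A|)^(L−1) and a map p : X × A → PMF(Z), depending only on the POMDP and the decoder p* (independent of the policy and of the step h), such that: for every L-step policy π, every step h with L−1 ≤ h ≤ H, and every k ∈ {1, …, L−1} with h+k ≤ H, there exists a function w_k : Z → ℝ for which the expectation of r(o_{h+k}, a_{h+k}) under the continuation process from (τ_h, a) equals Σ_{z∈Z} p(x_h, a)(z)·w_k(z), for every admissible history τ_h of length h (with L-step window x_h) and every action a ∈ A. -/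

import Mathlib

open Finset

/-- A probability distribution on a finite type, given by a real-valued mass function. -/
structure FDist (α : Type) [Fintype α] : Type where
  prob : α → ℝ
  nonneg : ∀ a, 0 ≤ prob a
  sum_one : ∑ a, prob a = 1

/-- A finite POMDP `(S, A, O, H, ρ0, P, Ω, r)`: finite state, action and observation spaces,
horizon `H`, initial state distribution `ρ0`, transition kernel `P`, emission kernel `emit`
(denoted Ω in the text), and reward `r`. -/
structure POMDP (S A O : Type) [Fintype S] [Fintype A] [Fintype O] : Type where
  H : ℕ
  ρ0 : FDist S
  P : S → A → FDist S
  emit : S → FDist O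
  r : O → A → ℝ

/-- A history of length `h`: observations `o_0, …, o_h` and actions `a_0, …, a_{h-1}`. -/
abbrev Hist (O A : Type) (h : ℕ) : Type := (Fin (h + 1) → O) × (Fin h → A)

/-- A (history-dependent) policy: at each step `h` and history `τ_h`, a distribution on actions. -/
abbrev Policy (O A : Type) [Fintype A] : Type := (h : ℕ) → Hist O A h → FDist A

/-- The `L`-step window space `X = (O × A)^(L-1) × O`. -/
abbrev Window (O A : Type) (L : ℕ) : Type := (Fin (L - 1) → O × A) × O

section POMDPDefs

variable {S A O : Type} [Fintype S] [Fintype A] [Fintype O]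

/-- The history of length `h` read off from a full trajectory of observations and actions. -/
def Hist.take (H : ℕ) {h : ℕ} (hh : h ≤ H) (o : Fin (H + 1) → O) (a : Fin (H + 1) → A) :
    Hist O A h :=
  (fun i => o (Fin.castLE (by omega) i), fun i => a (Fin.castLE (by omega) i))

/-- The `L`-step window `x_h = (o_{h-L+1}, a_{h-L+1}, …, a_{h-1}, o_h)` of a history of
length `h` (for `L - 1 ≤ h`). -/
def Hist.window (L : ℕ) {h : ℕ} (hL : L - 1 ≤ h) (τ : Hist O A h) : Window O A L :=
  (fun i =>
      (τ.1 ⟨h + 1 - L + i.val, by have := i.isLt; omega⟩,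
       τ.2 ⟨h + 1 - L + i.val, by have := i.isLt; omega⟩),
    τ.1 (Fin.last h))

/-- The history `τ_h` extended by the action `a`, then alternately by the observations
`ω 0, …, ω (k-1)` (playing the roles of `o_{h+1}, …, o_{h+k}`) and the actions
`α 0, …, α (k-2)` (playing the roles of `a_{h+1}, …, a_{h+k-1}`). -/
def Hist.extend {h : ℕ} (τ : Hist O A h) (a : A) {m : ℕ} (ω : Fin m → O) (α : Fin m → A)
    (k : ℕ) (hk : k ≤ m) : Hist O A (h + k) :=
  (fun i =>
      if hi : i.val ≤ h then τ.1 ⟨i.val, by omega⟩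
      else ω ⟨i.val - h - 1, by have := i.isLt; omega⟩,
    fun i =>
      if hi : i.val < h then τ.2 ⟨i.val, by omega⟩
      else if hi' : i.val = h then a
      else α ⟨i.val - h - 1, by have := i.isLt; omega⟩)

/-- The history `τ_h` extended by one action `a` and one observation `o'`. -/
def Hist.snoc {h : ℕ} (τ : Hist O A h) (a : A) (o' : O) : Hist O A (h + 1) :=
  (fun i => if hi : i.val ≤ h then τ.1 ⟨i.val, by omega⟩ else o',
    fun i => if hi : i.val < h then τ.2 ⟨i.val, by omega⟩ else a)

/-- The probability assigned by the trajectory distribution of the policy `π` to the full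
trajectory `(s_0, o_0, a_0, …, s_H, o_H, a_H)`:
`s_0 ∼ ρ0`, `o_t ∼ Ω(s_t)`, `a_t ∼ π_t(τ_t)`, `s_{t+1} ∼ P(s_t, a_t)`. -/
noncomputable def trajProb (M : POMDP S A O) (π : Policy O A)
    (s : Fin (M.H + 1) → S) (o : Fin (M.H + 1) → O) (a : Fin (M.H + 1) → A) : ℝ :=
  M.ρ0.prob (s 0)
    * ∏ t : Fin (M.H + 1), (M.emit (s t)).prob (o t)
    * ∏ t : Fin (M.H + 1),
        (π t.val (Hist.take M.H (Nat.lt_succ_iff.mp t.isLt) o a)).prob (a t)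
    * ∏ t : Fin M.H, (M.P (s t.castSucc) (a t.castSucc)).prob (s t.succ)

variable [DecidableEq S] [DecidableEq A] [DecidableEq O]

/-- The probability that the history at step `h` equals `τ`, under the trajectory
distribution of `π`. -/
noncomputable def histProb (M : POMDP S A O) (π : Policy O A) {h : ℕ} (hh : h ≤ M.H)
    (τ : Hist O A h) : ℝ :=
  ∑ s : Fin (M.H + 1) → S, ∑ o : Fin (M.H + 1) → O, ∑ a : Fin (M.H + 1) → A,
    if Hist.take M.H hh o a = τ then trajProb M π s o a else 0

/-- The probability that the history at step `h` equals `τ` and `s_h = s0`, under the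
trajectory distribution of `π`. -/
noncomputable def stateHistProb (M : POMDP S A O) (π : Policy O A) {h : ℕ} (hh : h ≤ M.H)
    (τ : Hist O A h) (s0 : S) : ℝ :=
  ∑ s : Fin (M.H + 1) → S, ∑ o : Fin (M.H + 1) → O, ∑ a : Fin (M.H + 1) → A,
    if Hist.take M.H hh o a = τ ∧ s ⟨h, by omega⟩ = s0 then trajProb M π s o a else 0

variable [Nonempty A]

/-- The uniform distribution on a finite nonempty type. -/
noncomputable def uniformDist (A : Type) [Fintype A] [Nonempty A] : FDist A where
  prob _ := (Fintype.card A : ℝ)⁻¹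
  nonneg _ := by positivity
  sum_one := by
    have h : (Fintype.card A : ℝ) ≠ 0 := Nat.cast_ne_zero.mpr Fintype.card_ne_zero
    simp [Finset.sum_const, Finset.card_univ, nsmul_eq_mul, h]

/-- The uniformly random policy. -/
noncomputable def uniformPolicy (O A : Type) [Fintype A] [Nonempty A] : Policy O A :=
  fun _ _ => uniformDist A

/-- A history is admissible if it has positive probability under the uniformly random policy. -/
def Admissible (M : POMDP S A O) {h : ℕ} (hh : h ≤ M.H) (τ : Hist O A h) : Prop :=
  0 < histProb M (uniformPolicy O A) hh τ

/-- The belief `b(τ_h)(s)`: the conditional probability of `s_h = s` given that the history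
equals `τ_h`, under the trajectory distribution of the uniformly random policy. -/
noncomputable def belief (M : POMDP S A O) {h : ℕ} (hh : h ≤ M.H) (τ : Hist O A h)
    (s0 : S) : ℝ :=
  stateHistProb M (uniformPolicy O A) hh τ s0 / histProb M (uniformPolicy O A) hh τ

/-- An outcome of the continuation process from step `h` with `m = H - h` remaining steps:
states `s_h, …, s_H`, observations `o_{h+1}, …, o_H` and actions `a_{h+1}, …, a_H`. -/
abbrev ContOutcome (S O A : Type) (m : ℕ) : Type :=
  (Fin (m + 1) → S) × (Fin m → O) × (Fin m → A)

/-- The probability assigned to the outcome `c` by the continuation process from `(τ, a)`: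
`s_h ∼ b(τ)`, `a_h = a`, and for `h < t ≤ H`: `s_t ∼ P(s_{t-1}, a_{t-1})`, `o_t ∼ Ω(s_t)`,
`a_t ∼ π_t(τ_t)` where `τ_t` is `τ` extended by `(a, o_{h+1}, a_{h+1}, …, o_t)`. -/
noncomputable def contProb (M : POMDP S A O) (π : Policy O A) {h : ℕ} (hh : h ≤ M.H)
    (τ : Hist O A h) (a : A) (c : ContOutcome S O A (M.H - h)) : ℝ :=
  belief M hh τ (c.1 0)
    * ∏ t : Fin (M.H - h),
        ((M.P (c.1 t.castSucc)
              (if ht : t.val = 0 then a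
               else c.2.2 ⟨t.val - 1, by have := t.isLt; omega⟩)).prob (c.1 t.succ)
          * (M.emit (c.1 t.succ)).prob (c.2.1 t)
          * (π (h + t.val + 1)
              (Hist.extend τ a c.2.1 c.2.2 (t.val + 1)
                (by have := t.isLt; omega))).prob (c.2.2 t))

/-- The action-value `Q_h^π(τ_h, a)`: the expectation of `Σ_{t=h}^{H} r(o_t, a_t)` under the
continuation process from `(τ_h, a)`. -/
noncomputable def Qval (M : POMDP S A O) (π : Policy O A) {h : ℕ} (hh : h ≤ M.H)
    (τ : Hist O A h) (a : A) : ℝ :=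
  ∑ c : ContOutcome S O A (M.H - h),
    contProb M π hh τ a c *
      (M.r (τ.1 (Fin.last h)) a + ∑ t : Fin (M.H - h), M.r (c.2.1 t) (c.2.2 t))

/-- The value `V_h^π(τ_h) = Σ_a π_h(τ_h)(a) · Q_h^π(τ_h, a)`. -/
noncomputable def Vval (M : POMDP S A O) (π : Policy O A) {h : ℕ} (hh : h ≤ M.H)
    (τ : Hist O A h) : ℝ :=
  ∑ a : A, (π h τ).prob a * Qval M π hh τ a

/-- The POMDP `M` is `L`-decodable with decoder `pstar` if the belief of every admissible
history of length `h` with `L - 1 ≤ h ≤ H` equals `pstar` applied to its `L`-step window. -/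
def IsDecodable (M : POMDP S A O) (L : ℕ) (pstar : Window O A L → FDist S) : Prop :=
  ∀ (h : ℕ) (hh : h ≤ M.H) (hL : L - 1 ≤ h) (τ : Hist O A h),
    Admissible M hh τ → ∀ s : S, belief M hh τ s = (pstar (Hist.window L hL τ)).prob s

/-- `π` is an `L`-step policy: for `L - 1 ≤ h ≤ H`, `π_h(τ_h)` depends on `τ_h` only
through its `L`-step window. -/
def IsLStepPolicy (M : POMDP S A O) (L : ℕ) (π : Policy O A) : Prop :=
  ∀ (h : ℕ), h ≤ M.H → ∀ (hL : L - 1 ≤ h) (τ τ' : Hist O A h),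
    Hist.window L hL τ = Hist.window L hL τ' → π h τ = π h τ'

end POMDPDefs

/-!
The latent variable is `z = (s_{h+1}, (o_{h-L+2}, a_{h-L+2}), …, (o_h, a_h))`. The law of `s_{h+1}`
given `(τ_h, a)` is `∑ s, b(τ_h)(s) P(s, a)`, which decodability expresses through the window
`x_h`, while the remaining components of `z` are a deterministic function of `(x_h, a)`. Given `z`,
the rest of the future no longer depends on `τ_h`: the window of every later history consists of
entries of `z` followed by new observations and actions, so an `L`-step policy cannot tell apart
two histories with the same `z`. Hence the conditional expectation of any function of the future
given `z` serves as `w`.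
-/

theorem sum_mul_sum_fiber {ι κ R : Type*} [Fintype ι] [Fintype κ] [DecidableEq κ]
    [NonUnitalNonAssocSemiring R] (f : ι → κ) (q : κ → R) (g : ι → R) :
    ∑ j, q j * ∑ i with f i = j, g i = ∑ i, q (f i) * g i := by
  simp only [mul_sum]
  rw [← sum_fiberwise univ f]
  refine sum_congr rfl fun j _ => sum_congr rfl fun i hi => ?_
  rw [(mem_filter.mp hi).2]

theorem prod_fin_eq_mul_prod_pred {R : Type*} [CommMonoid R] {m : ℕ} (hm : 0 < m)
    (g : Fin m → R) : ∏ t, g t = g ⟨0, hm⟩ * ∏ t : Fin (m - 1), g ⟨t + 1, by omega⟩ := by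
  obtain ⟨n, rfl⟩ := Nat.exists_eq_succ_of_ne_zero hm.ne'
  exact Fin.prod_univ_succ g

namespace FDist

variable {α β : Type} [Fintype α] [Fintype β]

/-- The law of the outcome of `K` started from a sample of `d`. -/
noncomputable def bind (d : FDist α) (K : α → FDist β) : FDist β where
  prob b := ∑ a, d.prob a * (K a).prob b
  nonneg b := sum_nonneg fun a _ => mul_nonneg (d.nonneg a) ((K a).nonneg b)
  sum_one := by
    rw [sum_comm]
    simp only [← mul_sum, sum_one, mul_one]

/-- The push-forward of `d` along `f`. -/
noncomputable def map [DecidableEq β] (f : α → β) (d : FDist α) : FDist β where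
  prob b := ∑ a with f a = b, d.prob a
  nonneg _ := sum_nonneg fun a _ => d.nonneg a
  sum_one := by rw [sum_fiberwise, d.sum_one]

theorem sum_map_mul [DecidableEq β] (f : α → β) (d : FDist α) (w : β → ℝ) :
    ∑ b, (d.map f).prob b * w b = ∑ a, d.prob a * w (f a) := by
  simp only [map, mul_comm _ (w _), sum_mul_sum_fiber]

end FDist

section Memory

variable {A O : Type} {L h : ℕ}

/-- The last `L - 1` observation-action pairs once action `a` is played after the window `x`; in
terms of times, `(o_{h-L+2}, a_{h-L+2}), …, (o_h, a_h)` with `a_h = a`. -/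
def Window.memory (x : Window O A L) (a : A) : Fin (L - 1) → O × A :=
  Fin.tail (Fin.snoc x.1 (x.2, a) : Fin (L - 1 + 1) → O × A)

/-- The observation-action pairs `(o_0, a_0), …, (o_h, a_h)` of the history `τ` followed by the
action `a_h = a`. -/
def Hist.pairs (τ : Hist O A h) (a : A) : Fin (h + 1) → O × A :=
  fun j => (τ.1 j, (Fin.snoc τ.2 a : Fin (h + 1) → A) j)

theorem Hist.memory_window_apply (hL : L - 1 ≤ h) (τ : Hist O A h) (a : A) (i : Fin (L - 1)) :
    (τ.window L hL).memory a i = τ.pairs a ⟨h + 1 - L + (i + 1), by omega⟩ := by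
  by_cases hi : i.val + 1 < L - 1
  · have hj : h + 1 - L + (i.val + 1) < h := by omega
    simp [Window.memory, Hist.pairs, Hist.window, Fin.tail, Fin.snoc, hi, hj]
  · have hj : h + 1 - L + (i.val + 1) = h := by omega
    simp [Window.memory, Hist.pairs, Hist.window, Fin.tail, Fin.snoc, hi, hj, Fin.last]

theorem Hist.window_extend_fst_apply (τ : Hist O A h) (a : A) {m k : ℕ} (ω : Fin m → O)
    (α : Fin m → A) (hk : k + 1 ≤ m) (hL : L - 1 ≤ h + (k + 1)) (i : Fin (L - 1)) :
    ((τ.extend a ω α (k + 1) hk).window L hL).1 i =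
      if hj : h + (k + 1) + 1 - L + i ≤ h then
        τ.pairs a ⟨h + (k + 1) + 1 - L + i, by omega⟩
      else
        (ω ⟨h + (k + 1) + 1 - L + i - h - 1, by omega⟩,
          α ⟨h + (k + 1) + 1 - L + i - h - 1, by omega⟩) := by
  rcases lt_trichotomy (h + (k + 1) + 1 - L + i.val) h with hj | hj | hj
  · simp [Hist.window, Hist.extend, Hist.pairs, Fin.snoc, hj, hj.le]
  · simp [Hist.window, Hist.extend, Hist.pairs, Fin.snoc, hj]
  · simp [Hist.window, Hist.extend, hj.not_ge, hj.not_gt, hj.ne']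

theorem Hist.window_extend_congr {hL : L - 1 ≤ h} {τ τ' : Hist O A h} {a a' : A}
    (hmem : (τ.window L hL).memory a = (τ'.window L hL).memory a') {m k : ℕ} (ω : Fin m → O)
    (α : Fin m → A) (hk : k + 1 ≤ m) (hL' : L - 1 ≤ h + (k + 1)) :
    (τ.extend a ω α (k + 1) hk).window L hL' = (τ'.extend a' ω α (k + 1) hk).window L hL' := by
  refine Prod.ext (funext fun i => ?_) ?_
  · simp only [Hist.window_extend_fst_apply]
    split_ifs with hj
    · have hpair := congrFun hmem ⟨k + i, by omega⟩
      have htime : h + 1 - L + (k + i + 1) = h + (k + 1) + 1 - L + i := by omega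
      simpa only [Hist.memory_window_apply, htime] using hpair
    · rfl
  · simp [Hist.window, Hist.extend]

end Memory

section Future

variable {S A O : Type} [Fintype S] [Fintype A] [Fintype O]

/-- What follows step `h` when `m` steps remain: states `s_{h+1}, …, s_{h+m}`, observations
`o_{h+1}, …, o_{h+m}` and actions `a_{h+1}, …, a_{h+m}`, so that entry `t` belongs to time
`h + t + 1`. -/
abbrev Future (S O A : Type) (m : ℕ) : Type := (Fin m → S) × (Fin m → O) × (Fin m → A)

/-- The conditional probability of the future `c` given `(τ_h, a)` and the next state
`s_{h+1} = c.1 0`. -/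
noncomputable def futureProb (M : POMDP S A O) (π : Policy O A) {h m : ℕ} (τ : Hist O A h) (a : A)
    (c : Future S O A m) : ℝ :=
  (∏ t : Fin (m - 1),
      (M.P (c.1 ⟨t, by omega⟩) (c.2.2 ⟨t, by omega⟩)).prob (c.1 ⟨t + 1, by omega⟩))
    * ∏ t : Fin m, ((M.emit (c.1 t)).prob (c.2.1 t)
      * (π (h + t + 1) (τ.extend a c.2.1 c.2.2 (t + 1) t.isLt)).prob (c.2.2 t))

theorem futureProb_congr {M : POMDP S A O} {π : Policy O A} {L h m : ℕ}
    (hπ : IsLStepPolicy M L π) (hmH : h + m ≤ M.H) {hL : L - 1 ≤ h} {τ τ' : Hist O A h} {a a' : A}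
    (hmem : (τ.window L hL).memory a = (τ'.window L hL).memory a') (c : Future S O A m) :
    futureProb M π τ a c = futureProb M π τ' a' c := by
  have hact (t : Fin m) : π (h + t + 1) (τ.extend a c.2.1 c.2.2 (t + 1) t.isLt) =
      π (h + t + 1) (τ'.extend a' c.2.1 c.2.2 (t + 1) t.isLt) :=
    hπ _ (by omega) (by omega) _ _ (Hist.window_extend_congr hmem _ _ _ _)
  simp only [futureProb, hact]

/-- The conditional expectation of `f` of the future given `(τ_h, a)` and `s_{h+1} = s'`. -/
noncomputable def futureValue [DecidableEq S] (M : POMDP S A O) (π : Policy O A) {h m : ℕ}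
    (hm : 0 < m) (f : Future S O A m → ℝ) (τ : Hist O A h) (a : A) (s' : S) : ℝ :=
  ∑ c : Future S O A m with c.1 ⟨0, hm⟩ = s', futureProb M π τ a c * f c

theorem futureValue_congr [DecidableEq S] {M : POMDP S A O} {π : Policy O A} {L h m : ℕ}
    (hπ : IsLStepPolicy M L π) (hm : 0 < m) (hmH : h + m ≤ M.H) (f : Future S O A m → ℝ)
    {hL : L - 1 ≤ h} {τ τ' : Hist O A h} {a a' : A}
    (hmem : (τ.window L hL).memory a = (τ'.window L hL).memory a') :
    futureValue M π hm f τ a = futureValue M π hm f τ' a' := by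
  funext s'
  simp only [futureValue, futureProb_congr hπ hmH hmem]

theorem sum_contOutcome_eq_sum_future {R : Type*} [AddCommMonoid R] {m : ℕ}
    (g : ContOutcome S O A m → R) :
    ∑ c, g c = ∑ s, ∑ c : Future S O A m, g (Fin.cons s c.1, c.2) := by
  rw [← Fintype.sum_prod_type']
  exact Fintype.sum_equiv
    (((Fin.consEquiv fun _ => S).symm.prodCongr (Equiv.refl _)).trans (Equiv.prodAssoc _ _ _))
    _ _ fun c => by simp [Fin.consEquiv]

variable [DecidableEq S] [DecidableEq A] [DecidableEq O] [Nonempty A]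

theorem contProb_cons (M : POMDP S A O) (π : Policy O A) {h : ℕ} (hh : h < M.H)
    (τ : Hist O A h) (a : A) (s : S) (c : Future S O A (M.H - h)) :
    contProb M π hh.le τ a (Fin.cons s c.1, c.2) =
      belief M hh.le τ s * (M.P s a).prob (c.1 ⟨0, Nat.sub_pos_of_lt hh⟩) *
        futureProb M π τ a c := by
  simp only [contProb, futureProb, mul_assoc, prod_mul_distrib]
  rw [prod_fin_eq_mul_prod_pred (Nat.sub_pos_of_lt hh), mul_assoc]
  rfl

theorem sum_contProb_mul (M : POMDP S A O) (π : Policy O A) {h : ℕ} (hh : h < M.H)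
    (f : Future S O A (M.H - h) → ℝ) (τ : Hist O A h) (a : A) :
    ∑ c, contProb M π hh.le τ a c * f (Fin.tail c.1, c.2) =
      ∑ s', (∑ s, belief M hh.le τ s * (M.P s a).prob s') *
        futureValue M π (Nat.sub_pos_of_lt hh) f τ a s' := by
  simp only [futureValue]
  rw [sum_mul_sum_fiber, sum_contOutcome_eq_sum_future, sum_comm]
  simp only [contProb_cons M π hh, Fin.tail_cons, sum_mul, mul_assoc]

end Future

theorem statement2_general
    {S A O : Type} [Fintype S] [Fintype A] [Fintype O] [Nonempty A]
    [DecidableEq S] [DecidableEq A] [DecidableEq O]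
    (M : POMDP S A O) (L : ℕ) (_hL1 : 1 ≤ L)
    (pstar : Window O A L → FDist S) (hdec : IsDecodable M L pstar) :
    ∃ n : ℕ, n ≤ Fintype.card S * (Fintype.card O * Fintype.card A) ^ (L - 1) ∧
      ∃ p : Window O A L → A → FDist (Fin n),
        ∀ π : Policy O A, IsLStepPolicy M L π →
          ∀ (h : ℕ) (hL : L - 1 ≤ h) (hh : h < M.H) (f : Future S O A (M.H - h) → ℝ),
            ∃ w : Fin n → ℝ, ∀ τ : Hist O A h, Admissible M hh.le τ → ∀ a : A,
              ∑ c, contProb M π hh.le τ a c * f (Fin.tail c.1, c.2) =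
                ∑ z, (p (τ.window L hL) a).prob z * w z := by
  let e := Fintype.equivFin (S × (Fin (L - 1) → O × A))
  refine ⟨_, by simp, fun x a => ((pstar x).bind (M.P · a)).map fun s => e (s, x.memory a), ?_⟩
  intro π hπ h hL hh f
  let memory (q : Hist O A h × A) := (q.1.window L hL).memory q.2
  let value (q : Hist O A h × A) := futureValue M π (Nat.sub_pos_of_lt hh) f q.1 q.2
  have hvalue : value.FactorsThrough memory := fun _ _ hmem =>
    futureValue_congr hπ _ (by omega) f hmem
  refine ⟨fun z => Function.extend memory value 0 (e.symm z).2 (e.symm z).1, fun τ hτ a => ?_⟩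
  have hextend : Function.extend memory value 0 ((τ.window L hL).memory a) = value (τ, a) :=
    hvalue.extend_apply 0 (τ, a)
  calc ∑ c, contProb M π hh.le τ a c * f (Fin.tail c.1, c.2)
      = ∑ s', ((pstar (τ.window L hL)).bind (M.P · a)).prob s' * value (τ, a) s' := by
        simp only [sum_contProb_mul M π hh, hdec h hh.le hL τ hτ, FDist.bind, value]
    _ = _ := by simp only [FDist.sum_map_mul, Equiv.symm_apply_apply, hextend]

/-- In an `L`-decodable finite POMDP, there is a latent space `Z` with
`|Z| ≤ |S|·(|O|·|A|)^(L-1)` and a representation `p : X × A → PMF(Z)`, independent of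
the policy and the step, such that for every `L`-step policy `π`, every step `h` with
`L-1 ≤ h ≤ H`, and every `k ∈ {1, …, L-1}` with `h + k ≤ H`, there exists `w_k : Z → ℝ`
with: the expectation of `r(o_{h+k}, a_{h+k})` under the continuation process from
`(τ_h, a)` equals `Σ_z p(x_h, a)(z)·w_k(z)`. -/
theorem statement2
    {S A O : Type} [Fintype S] [Fintype A] [Fintype O]
    [Nonempty S] [Nonempty A] [Nonempty O]
    [DecidableEq S] [DecidableEq A] [DecidableEq O]
    (M : POMDP S A O) (L : ℕ) (hL1 : 1 ≤ L)
    (pstar : Window O A L → FDist S)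
    (hdec : IsDecodable M L pstar) :
    ∃ n : ℕ, n ≤ Fintype.card S * (Fintype.card O * Fintype.card A) ^ (L - 1) ∧
      ∃ p : Window O A L → A → FDist (Fin n),
        ∀ π : Policy O A, IsLStepPolicy M L π →
          ∀ (h : ℕ) (hL : L - 1 ≤ h) (hh : h ≤ M.H),
            ∀ (k : ℕ) (hk1 : 1 ≤ k) (hkL : k ≤ L - 1) (hhk : h + k ≤ M.H),
              ∃ w : Fin n → ℝ,
                ∀ τ : Hist O A h, Admissible M hh τ → ∀ a : A,
                  (∑ c : ContOutcome S O A (M.H - h),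
                      contProb M π hh τ a c *
                        M.r (c.2.1 ⟨k - 1, by omega⟩) (c.2.2 ⟨k - 1, by omega⟩)) =
                    ∑ z : Fin n, (p (Hist.window L hL τ) a).prob z * w z := by
  obtain ⟨n, hn, p, hp⟩ := statement2_general M L hL1 pstar hdec
  exact ⟨n, hn, p, fun π hπ h hL _ k _ _ _ =>
    hp π hπ h hL (by omega) fun c => M.r (c.2.1 ⟨k - 1, by omega⟩) (c.2.2 ⟨k - 1, by omega⟩)⟩
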